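/- Let u : ℝ^d → ℝ decompose as u = v + w with v, w ∈ C², ∇²v ≥ η I_d for some η > 0, and |∇w| ≤ M. Then the probability measure p(dx) proportional to e^{−u(x)} dx satisfies a Poincaré inequality ∫ f² dp ≤ C_P ∫ |∇f|² dp for all f ∈ H¹(p) with ∫ f dp = 0, where the constant C_P = C(η, M, d) depends only on η, M and the dimension d. -/

import Mathlib

open MeasureTheory Real Filter Set
open scoped RealInnerProductSpace Topology ENNReal NNReal

noncomputable section

/-- Euclidean space `ℝ^d`. -/
abbrev Euc (d : ℕ) := EuclideanSpace ℝ (Fin d)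

open scoped Pointwise in
/-- One-dimensional Brunn-Minkowski, in midpoint form. -/
lemma bm_one {A B C : Set ℝ} (hA : MeasurableSet A) (hB : MeasurableSet B)
    (hA0 : A.Nonempty) (hB0 : B.Nonempty)
    (h : ∀ x ∈ A, ∀ y ∈ B, (1/2 : ℝ) * (x + y) ∈ C) :
    volume A + volume B ≤ 2 * volume C := by
  -- compact case
  have key : ∀ K L : Set ℝ, IsCompact K → IsCompact L → K.Nonempty → L.Nonempty → K ⊆ A → L ⊆ B →
      volume K + volume L ≤ 2 * volume C := by
    intro K L hK hL hK0 hL0 hKA hLB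
    obtain ⟨b, hbK, hb⟩ := hK.exists_isGreatest hK0
    obtain ⟨a, haL, ha⟩ := hL.exists_isLeast hL0
    have h1 : volume ((fun x => a + x) '' K ∪ (fun x => b + x) '' L) ≤ 2 * volume C := by
      have : ((fun x => a + x) '' K ∪ (fun x => b + x) '' L) ⊆ (2 : ℝ) • C := by
        rintro z (⟨x, hx, rfl⟩ | ⟨y, hy, rfl⟩)
        · refine ⟨_, h x (hKA hx) a (hLB haL), ?_⟩
          simp; ring
        · refine ⟨_, h b (hKA hbK) y (hLB hy), ?_⟩
          simp
      calc _ ≤ volume ((2 : ℝ) • C) := measure_mono this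
        _ = _ := by rw [Measure.addHaar_smul]; simp
    have h2 : volume ((fun x => a + x) '' K ∪ (fun x => b + x) '' L)
        = volume ((fun x => a + x) '' K) + volume ((fun x => b + x) '' L) := by
      apply measure_union₀
      · exact (hL.image (by fun_prop)).measurableSet.nullMeasurableSet
      · have : (fun x => a + x) '' K ∩ (fun x => b + x) '' L ⊆ {a + b} := by
          rintro z ⟨⟨x, hx, rfl⟩, ⟨y, hy, hxy⟩⟩
          have := hb hx
          have := ha hy
          simp only at hxy
          simp only [mem_singleton_iff]
          linarith
        exact measure_mono_null this (by simp)
    rw [h2] at h1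
    simpa using h1
  obtain ⟨a0, ha0⟩ := hA0
  obtain ⟨b0, hb0⟩ := hB0
  rw [hA.measure_eq_iSup_isCompact, hB.measure_eq_iSup_isCompact]
  simp only [iSup_and']
  refine ENNReal.biSup_add_biSup_le' (p := fun K => K ⊆ A ∧ IsCompact K)
    (q := fun K => K ⊆ B ∧ IsCompact K) ⟨∅, by simp⟩ ⟨∅, by simp⟩ ?_
  rintro K ⟨hKA, hK⟩ L ⟨hLB, hL⟩
  refine le_trans ?_ (key (insert a0 K) (insert b0 L) (hK.insert _) (hL.insert _) (by simp) (by simp)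
    (insert_subset ha0 hKA) (insert_subset hb0 hLB))
  gcongr <;> simp

lemma pl_core {f g h : ℝ → ℝ} (hf : Measurable f) (hg : Measurable g) (hh : Measurable h)
    (f0 : ∀ x, 0 ≤ f x) (g0 : ∀ x, 0 ≤ g x) (h0 : ∀ x, 0 ≤ h x)
    (f1 : ∀ x, f x ≤ 1) (g1 : ∀ x, g x ≤ 1)
    (fs : ∀ t < 1, ∃ x, t < f x) (gs : ∀ t < 1, ∃ x, t < g x)
    (hm : ∀ x y, min (f x) (g y) ≤ h ((1/2 : ℝ) * (x + y))) :
    (∫⁻ x, ENNReal.ofReal (f x)) + (∫⁻ x, ENNReal.ofReal (g x))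
      ≤ 2 * ∫⁻ x, ENNReal.ofReal (h x) := by
  rw [lintegral_eq_lintegral_meas_lt _ (ae_of_all _ f0) hf.aemeasurable,
    lintegral_eq_lintegral_meas_lt _ (ae_of_all _ g0) hg.aemeasurable,
    lintegral_eq_lintegral_meas_lt _ (ae_of_all _ h0) hh.aemeasurable,
    ← lintegral_const_mul' _ _ (by simp), ← lintegral_add_left]
  · refine lintegral_mono fun t => ?_
    by_cases ht : t < 1
    · apply bm_one (measurableSet_lt measurable_const hf) (measurableSet_lt measurable_const hg)
        (fs t ht) (gs t ht)
      intro x hx y hy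
      exact lt_of_lt_of_le (lt_min hx hy) (hm x y)
    · have e1 : {a | t < f a} = ∅ := by
        ext x; simp; linarith [f1 x]
      have e2 : {a | t < g a} = ∅ := by
        ext x; simp; linarith [g1 x]
      simp [e1, e2]
  · refine Antitone.measurable ?_
    intro s t hst
    exact measure_mono fun x hx => lt_of_le_of_lt hst hx

lemma pl_real_bdd {f g h : ℝ → ℝ} (hf : Measurable f) (hg : Measurable g) (hh : Measurable h)
    (f0 : ∀ x, 0 ≤ f x) (g0 : ∀ x, 0 ≤ g x) (h0 : ∀ x, 0 ≤ h x)
    {N : ℝ} (f1 : ∀ x, f x ≤ N) (g1 : ∀ x, g x ≤ N)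
    (hm : ∀ x y, f x * g y ≤ h ((1/2 : ℝ) * (x + y)) ^ 2) :
    (∫⁻ x, ENNReal.ofReal (f x)) * (∫⁻ x, ENNReal.ofReal (g x))
      ≤ (∫⁻ x, ENNReal.ofReal (h x)) ^ 2 := by
  have bf : BddAbove (range f) := ⟨N, by rintro _ ⟨x, rfl⟩; exact f1 x⟩
  have bg : BddAbove (range g) := ⟨N, by rintro _ ⟨x, rfl⟩; exact g1 x⟩
  set a := ⨆ x, f x with ha
  set b := ⨆ x, g x with hb
  have fa : ∀ x, f x ≤ a := fun x => le_ciSup bf x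
  have gb : ∀ x, g x ≤ b := fun x => le_ciSup bg x
  rcases (f0 0 |>.trans (fa 0)).eq_or_lt with ha0 | ha0
  · have : ∀ x, f x = 0 := fun x => le_antisymm (by rw [ha0]; exact fa x) (f0 x)
    simp [this]
  rcases (g0 0 |>.trans (gb 0)).eq_or_lt with hb0 | hb0
  · have : ∀ x, g x = 0 := fun x => le_antisymm (by rw [hb0]; exact gb x) (g0 x)
    simp [this]
  have hab : 0 < √(a * b) := by positivity
  have sab : √(a * b) ^ 2 = a * b := Real.sq_sqrt (by positivity)
  have core := pl_core (f := fun x => f x / a) (g := fun x => g x / b)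
    (h := fun x => h x / √(a * b)) (hf.div_const _) (hg.div_const _) (hh.div_const _)
    (fun x => div_nonneg (f0 x) ha0.le) (fun x => div_nonneg (g0 x) hb0.le)
    (fun x => div_nonneg (h0 x) hab.le) (fun x => (div_le_one ha0).2 (fa x))
    (fun x => (div_le_one hb0).2 (gb x))
    (fun t ht => by
      obtain ⟨x, hx⟩ := exists_lt_of_lt_ciSup (f := f) (show t * a < ⨆ x, f x by nlinarith)
      exact ⟨x, (lt_div_iff₀ ha0).2 hx⟩)
    (fun t ht => by
      obtain ⟨x, hx⟩ := exists_lt_of_lt_ciSup (f := g) (show t * b < ⨆ x, g x by nlinarith)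
      exact ⟨x, (lt_div_iff₀ hb0).2 hx⟩)
    (fun x y => by
      have h1 := hm x y
      have p1 := div_nonneg (f0 x) ha0.le
      have p2 := div_nonneg (g0 y) hb0.le
      have h2 : f x / a * (g y / b) ≤ (h ((1/2 : ℝ) * (x + y)) / √(a * b)) ^ 2 := by
        rw [div_pow, sab, div_mul_div_comm]
        gcongr
      refine abs_le_of_sq_le_sq' ?_ (div_nonneg (h0 _) hab.le) |>.2
      refine le_trans ?_ h2
      rw [sq]
      exact mul_le_mul (min_le_left _ _) (min_le_right _ _) (le_min p1 p2) p1)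
  have e : ∀ (k : ℝ → ℝ) (c : ℝ), 0 < c → ∫⁻ x, ENNReal.ofReal (k x / c)
      = (∫⁻ x, ENNReal.ofReal (k x)) * ENNReal.ofReal c⁻¹ := by
    intro k c hc
    rw [← lintegral_mul_const' _ _ (by simp)]
    refine lintegral_congr fun x => ?_
    rw [div_eq_mul_inv, ENNReal.ofReal_mul' (by positivity)]
  rw [e f a ha0, e g b hb0, e h _ hab] at core
  generalize ∫⁻ x, ENNReal.ofReal (f x) = F at *
  generalize ∫⁻ x, ENNReal.ofReal (g x) = G at *
  generalize ∫⁻ x, ENNReal.ofReal (h x) = H at *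
  by_cases hH : H = ⊤
  · simp [hH]
  have ia : ENNReal.ofReal a⁻¹ ≠ 0 := by simpa using ha0
  have ib : ENNReal.ofReal b⁻¹ ≠ 0 := by simpa using hb0
  have hr : 2 * (H * ENNReal.ofReal (√(a * b))⁻¹) ≠ ⊤ := by finiteness
  have hFG := ne_top_of_le_ne_top hr core
  have hF : F ≠ ⊤ := by
    rintro rfl
    rw [ENNReal.top_mul ia] at hFG
    simp at hFG
  have hG : G ≠ ⊤ := by
    rintro rfl
    rw [ENNReal.top_mul ib] at hFG
    simp at hFG
  lift F to ℝ≥0 using hF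
  lift G to ℝ≥0 using hG
  lift H to ℝ≥0 using hH
  have core' := ENNReal.toReal_mono hr core
  rw [ENNReal.toReal_add (by finiteness) (by finiteness)] at core'
  simp only [ENNReal.toReal_mul, ENNReal.coe_toReal, ENNReal.toReal_ofNat] at core'
  rw [ENNReal.toReal_ofReal (by positivity), ENNReal.toReal_ofReal (by positivity),
    ENNReal.toReal_ofReal (by positivity)] at core'
  norm_cast
  rw [← NNReal.coe_le_coe]
  push_cast
  set s := √(a * b)
  have hF0 : (0 : ℝ) ≤ F := F.2
  have hG0 : (0 : ℝ) ≤ G := G.2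
  have q : (F * a⁻¹ + G * b⁻¹ : ℝ) ^ 2 ≤ (2 * (H * s⁻¹)) ^ 2 := by gcongr
  have q2 : 4 * ((F * a⁻¹) * (G * b⁻¹)) ≤ (F * a⁻¹ + G * b⁻¹ : ℝ) ^ 2 := by
    nlinarith [sq_nonneg (F * a⁻¹ - G * b⁻¹ : ℝ)]
  have q3 : (2 * (H * s⁻¹)) ^ 2 = 4 * ((H : ℝ) ^ 2 * (a * b)⁻¹) := by
    rw [← sab, ← inv_pow]; ring
  have q4 : (F * a⁻¹) * (G * b⁻¹) = (F * G * (a * b)⁻¹ : ℝ) := by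
    rw [mul_inv]; ring
  rw [q3] at q
  rw [q4] at q2
  have q5 : (F * G * (a * b)⁻¹ : ℝ) ≤ (H : ℝ) ^ 2 * (a * b)⁻¹ := by linarith
  exact le_of_mul_le_mul_right q5 (by positivity)

/-- Midpoint Prékopa–Leindler property. -/
def PL (E : Type*) [AddCommGroup E] [Module ℝ E] [MeasureSpace E] : Prop :=
  ∀ f g h : E → ℝ≥0∞, Measurable f → Measurable g → Measurable h →
    (∀ x y, f x * g y ≤ h ((1/2 : ℝ) • (x + y)) ^ 2) →
    (∫⁻ x, f x) * (∫⁻ x, g x) ≤ (∫⁻ x, h x) ^ 2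

lemma pl_real : PL ℝ := by
  intro f g h hf hg hh hm
  have step : ∀ n : ℕ, (∫⁻ x, min (f x) n) * (∫⁻ x, min (g x) n) ≤ (∫⁻ x, h x) ^ 2 := by
    intro n
    have nt : ∀ (k : ℝ → ℝ≥0∞) x, min (k x) n ≠ ⊤ := fun k x =>
      ne_top_of_le_ne_top (ENNReal.natCast_ne_top n) (min_le_right _ _)
    have ms : ∀ (k : ℝ → ℝ≥0∞), Measurable k → Measurable fun x => (min (k x) n).toReal :=
      fun k hk => (hk.min measurable_const).ennreal_toReal
    have bd : ∀ (k : ℝ → ℝ≥0∞) x, (min (k x) n).toReal ≤ n := fun k x => by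
      have := ENNReal.toReal_mono (ENNReal.natCast_ne_top n) (min_le_right (k x) n)
      simpa using this
    have := pl_real_bdd (ms f hf) (ms g hg) (ms h hh) (fun _ => ENNReal.toReal_nonneg)
      (fun _ => ENNReal.toReal_nonneg) (fun _ => ENNReal.toReal_nonneg) (bd f) (bd g)
      (fun x y => by
        rw [← ENNReal.toReal_mul, ← ENNReal.toReal_pow]
        apply ENNReal.toReal_mono (ENNReal.pow_ne_top (nt h _))
        rcases le_total (h ((1/2 : ℝ) * (x + y))) n with hc | hc
        · rw [min_eq_left hc]
          refine le_trans ?_ (hm x y)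
          gcongr <;> exact min_le_left _ _
        · rw [min_eq_right hc, sq]
          gcongr <;> exact min_le_right _ _)
    simp only [ENNReal.ofReal_toReal (nt _ _)] at this
    refine this.trans ?_
    gcongr
    exact min_le_left _ _
  have lim : ∀ k : ℝ → ℝ≥0∞, Measurable k →
      Tendsto (fun n : ℕ => ∫⁻ x, min (k x) n) atTop (𝓝 (∫⁻ x, k x)) := by
    intro k hk
    apply lintegral_tendsto_of_tendsto_of_monotone
    · exact fun n => (hk.min measurable_const).aemeasurable
    · refine ae_of_all _ fun x n m hnm => ?_
      simp only
      gcongr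
    · refine ae_of_all _ fun x => ?_
      have := (tendsto_const_nhds (x := k x) (f := atTop)).min ENNReal.tendsto_nat_nhds_top
      simpa using this
  have mono : ∀ k : ℝ → ℝ≥0∞, Monotone (fun n : ℕ => ∫⁻ x, min (k x) n) := by
    intro k n m hnm
    simp only
    gcongr
  have e : ∀ k : ℝ → ℝ≥0∞, Measurable k → ∫⁻ x, k x = ⨆ n : ℕ, ∫⁻ x, min (k x) n :=
    fun k hk => tendsto_nhds_unique (lim k hk) (tendsto_atTop_iSup (mono k))
  rw [e f hf, e g hg]
  rw [ENNReal.iSup_mul]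
  refine iSup_le fun n => ?_
  rw [ENNReal.mul_iSup]
  refine iSup_le fun m => ?_
  refine le_trans ?_ (step (max n m))
  exact mul_le_mul' (mono f (le_max_left _ _)) (mono g (le_max_right _ _))

lemma pl_prod {E F : Type*} [AddCommGroup E] [Module ℝ E] [MeasureSpace E]
    [AddCommGroup F] [Module ℝ F] [MeasureSpace F] [SFinite (volume : Measure F)]
    [SFinite (volume : Measure E)]
    (hE : PL E) (hF : PL F) : PL (E × F) := by
  intro f g h hf hg hh hm
  rw [Measure.volume_eq_prod, lintegral_prod _ hf.aemeasurable, lintegral_prod _ hg.aemeasurable,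
    lintegral_prod _ hh.aemeasurable]
  refine hE _ _ _ hf.lintegral_prod_right' hg.lintegral_prod_right' hh.lintegral_prod_right' ?_
  intro x x'
  refine hF _ _ _ (hf.comp measurable_prodMk_left) (hg.comp measurable_prodMk_left)
    (hh.comp measurable_prodMk_left) ?_
  intro y y'
  exact hm (x, y) (x', y')

lemma pl_equiv {E F : Type*} [AddCommGroup E] [Module ℝ E] [MeasureSpace E]
    [AddCommGroup F] [Module ℝ F] [MeasureSpace F] (e : E ≃ᵐ F)
    (he : MeasurePreserving e) (hl : ∀ x y, e.symm ((1/2 : ℝ) • (x + y)) =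
      (1/2 : ℝ) • (e.symm x + e.symm y)) (hE : PL E) : PL F := by
  intro f g h hf hg hh hm
  rw [← he.lintegral_comp hf, ← he.lintegral_comp hg, ← he.lintegral_comp hh]
  refine hE _ _ _ (hf.comp e.measurable) (hg.comp e.measurable) (hh.comp e.measurable) ?_
  intro x y
  have := hm (e x) (e y)
  have q := hl (e x) (e y)
  simp only [MeasurableEquiv.symm_apply_apply] at q
  rw [← q, MeasurableEquiv.apply_symm_apply]
  exact this

lemma pl_fin (n : ℕ) : PL (Fin n → ℝ) := by
  induction n with
  | zero =>
    intro f g h hf hg hh hm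
    have := hm default default
    rw [volume_pi, Measure.pi_of_empty _ default]
    rw [lintegral_dirac, lintegral_dirac, lintegral_dirac]
    convert this
  | succ n ih =>
    refine pl_equiv (MeasurableEquiv.piFinSuccAbove (fun _ : Fin (n + 1) => ℝ) 0).symm
      (volume_preserving_piFinSuccAbove (fun _ : Fin (n + 1) => ℝ) 0).symm ?_ (pl_prod pl_real ih)
    intro x y
    rfl

lemma pl_euc (d : ℕ) : PL (Euc d) := by
  refine pl_equiv (MeasurableEquiv.toLp 2 (Fin d → ℝ)) (PiLp.volume_preserving_toLp (Fin d)) ?_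
    (pl_fin d)
  intro x y
  rfl

lemma exp_lower {s : ℝ} (hs : |s| ≤ 1) : 1 + s + s ^ 2 / 2 - |s| ^ 3 ≤ Real.exp s := by
  have h := Real.exp_bound hs (n := 3) (by norm_num)
  simp only [Finset.sum_range_succ, Finset.sum_range_zero] at h
  norm_num [Nat.factorial] at h
  have h2 := (abs_le.1 h).1
  have : 0 ≤ |s| ^ 3 := by positivity
  linarith

lemma var_core {Ω : Type*} [MeasurableSpace Ω] (m : Measure Ω) [IsFiniteMeasure m]
    {G D : Ω → ℝ} (hG : Measurable G) (hD : Measurable D) {B q : ℝ} (hq : 0 < q)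
    (hB : ∀ x, |G x| ≤ B) (hDB : ∀ x, D x ^ 2 ≤ B) (hG0 : ∫ x, G x ∂m = 0)
    (H : ∀ᶠ ε in 𝓝[>] (0 : ℝ), (∫ x, Real.exp (ε * G x - ε ^ 2 * q * D x ^ 2) ∂m) *
      (∫ x, Real.exp (-(ε * G x)) ∂m) ≤ m.real univ ^ 2) :
    ∫ x, G x ^ 2 ∂m ≤ q * ∫ x, D x ^ 2 ∂m := by
  rcases eq_or_ne m 0 with hm0 | hm0
  · simp [hm0]
  have hm : 0 < m.real univ := by
    rw [measureReal_def]
    exact ENNReal.toReal_pos (by simpa using hm0) (by finiteness)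
  have : Nonempty Ω := by
    by_contra hne
    rw [not_nonempty_iff] at hne
    exact hm0 (Measure.eq_zero_of_isEmpty m)
  have hB0 : 0 ≤ B := (abs_nonneg _).trans (hB (Classical.arbitrary Ω))
  set M := m.real univ with hM
  set C := B * (1 + q) with hC
  set γ := (q * B ^ 2 + C ^ 3) with hγ
  have hC0 : 0 ≤ C := by positivity
  have iG : Integrable G m := Integrable.of_bound hG.aestronglyMeasurable B (ae_of_all _ hB)
  have iG2 : Integrable (fun x => G x ^ 2) m :=
    Integrable.of_bound (hG.pow_const 2).aestronglyMeasurable (B ^ 2) (ae_of_all _ fun x => by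
      rw [norm_pow]; exact pow_le_pow_left₀ (norm_nonneg _) (hB x) 2)
  have iD2 : Integrable (fun x => D x ^ 2) m :=
    Integrable.of_bound (hD.pow_const 2).aestronglyMeasurable B (ae_of_all _ fun x => by
      rw [Real.norm_of_nonneg (by positivity)]; exact hDB x)
  set I := ∫ x, G x ^ 2 ∂m
  set J := ∫ x, D x ^ 2 ∂m
  -- the two lower bounds
  have low : ∀ ε : ℝ, 0 < ε → ε ≤ 1 → ε * C ≤ 1 → ∀ σ : ℝ, 0 ≤ σ → σ ≤ q → ∀ τ : ℝ, τ ^ 2 = 1 →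
      M + ε ^ 2 * (I / 2 - σ * J) - ε ^ 3 * (γ * M) ≤
        ∫ x, Real.exp (ε * τ * G x - ε ^ 2 * σ * D x ^ 2) ∂m := by
    intro ε e0 e1 eC σ s0 hσq τ ht
    have hτ : |τ| = 1 := by
      rw [← sq_abs] at ht
      nlinarith [abs_nonneg τ]
    have sb : ∀ x, |ε * τ * G x - ε ^ 2 * σ * D x ^ 2| ≤ ε * C := by
      intro x
      have hd := hDB x
      have hd0 : 0 ≤ D x ^ 2 := by positivity
      calc _ ≤ |ε * τ * G x| + |ε ^ 2 * σ * D x ^ 2| := abs_sub _ _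
        _ = ε * |G x| + ε ^ 2 * σ * D x ^ 2 := by
          rw [abs_mul, abs_mul, hτ, abs_of_pos e0, abs_of_nonneg (a := ε ^ 2 * σ * D x ^ 2) (by positivity)]; ring
        _ ≤ ε * B + ε * q * B := by
          have : ε ^ 2 ≤ ε := by nlinarith
          gcongr
          exact hB x
        _ = ε * C := by rw [hC]; ring
    have pt : ∀ x, 1 + ε * τ * G x - ε ^ 2 * σ * D x ^ 2 + ε ^ 2 / 2 * G x ^ 2 - ε ^ 3 * γ ≤
        Real.exp (ε * τ * G x - ε ^ 2 * σ * D x ^ 2) := by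
      intro x
      refine le_trans ?_ (exp_lower ((sb x).trans eC))
      have c3 : |ε * τ * G x - ε ^ 2 * σ * D x ^ 2| ^ 3 ≤ (ε * C) ^ 3 :=
        pow_le_pow_left₀ (abs_nonneg _) (sb x) 3
      have hd := hDB x
      have hd0 : 0 ≤ D x ^ 2 := by positivity
      have sq2 : ε ^ 2 * G x ^ 2 - 2 * ε ^ 3 * (q * B ^ 2) ≤ (ε * τ * G x - ε ^ 2 * σ * D x ^ 2) ^ 2 := by
        have e : (ε * τ * G x - ε ^ 2 * σ * D x ^ 2) ^ 2 = ε ^ 2 * G x ^ 2 * τ ^ 2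
          - 2 * ε ^ 3 * (σ * (D x ^ 2 * (τ * G x))) + (ε ^ 2 * σ * D x ^ 2) ^ 2 := by ring
        have k1 : τ * G x ≤ B := by
          refine (le_abs_self _).trans ?_
          rw [abs_mul, hτ, one_mul]; exact hB x
        have k2 : D x ^ 2 * (τ * G x) ≤ B * B :=
          (mul_le_mul_of_nonneg_left k1 hd0).trans (mul_le_mul_of_nonneg_right hd hB0)
        have k3 : σ * (D x ^ 2 * (τ * G x)) ≤ q * B ^ 2 := by
          calc _ ≤ σ * (B * B) := mul_le_mul_of_nonneg_left k2 s0
            _ ≤ q * B ^ 2 := by rw [sq]; gcongr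
        have k4 := mul_le_mul_of_nonneg_left k3 (show 0 ≤ 2 * ε ^ 3 by positivity)
        rw [e, ht]
        nlinarith [sq_nonneg (ε ^ 2 * σ * D x ^ 2)]
      rw [hγ]
      have : (ε * C) ^ 3 = ε ^ 3 * C ^ 3 := by ring
      nlinarith
    have ie : Integrable (fun x => Real.exp (ε * τ * G x - ε ^ 2 * σ * D x ^ 2)) m := by
      refine Integrable.of_bound (Measurable.aestronglyMeasurable ?_) (Real.exp (ε * C)) (ae_of_all _ fun x => ?_)
      · exact (((hG.const_mul _).sub ((hD.pow_const 2).const_mul _))).exp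
      · rw [Real.norm_of_nonneg (Real.exp_pos _).le]
        exact Real.exp_le_exp.2 ((le_abs_self _).trans (sb x))
    have il : Integrable (fun x => 1 + ε * τ * G x - ε ^ 2 * σ * D x ^ 2 + ε ^ 2 / 2 * G x ^ 2 - ε ^ 3 * γ) m :=
      ((((integrable_const _).add (iG.const_mul _)).sub (iD2.const_mul _)).add (iG2.const_mul _)).sub (integrable_const _)
    refine le_trans (le_of_eq ?_) (integral_mono il ie pt)
    have j1 : Integrable (fun x => 1 + ε * τ * G x) m := (integrable_const _).add (iG.const_mul _)
    have j2 : Integrable (fun x => 1 + ε * τ * G x - ε ^ 2 * σ * D x ^ 2) m :=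
      j1.sub (iD2.const_mul _)
    have j3 : Integrable (fun x => 1 + ε * τ * G x - ε ^ 2 * σ * D x ^ 2 + ε ^ 2 / 2 * G x ^ 2) m :=
      j2.add (iG2.const_mul _)
    rw [integral_sub j3 (integrable_const _), integral_add j2 (iG2.const_mul _),
      integral_sub j1 (iD2.const_mul _), integral_add (integrable_const _) (iG.const_mul _),
      integral_const_mul, integral_const_mul, integral_const_mul, hG0]
    simp only [integral_const, smul_eq_mul]
    ring
  set α := I / 2 - q * J
  set β := I / 2 - 0 * J
  set δ := γ * M
  suffices hs : M * (α + β) ≤ 0 by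
    have : α + β ≤ 0 := by
      by_contra hc; push Not at hc; nlinarith [mul_pos hm hc]
    have e : α + β = I - q * J := by simp only [α, β]; ring
    linarith
  have t1 : Tendsto (fun ε : ℝ => M * (α + β) - 2 * M * ε * δ + ε ^ 2 * ((α - ε * δ) * (β - ε * δ))) (𝓝[>] 0)
      (𝓝 (M * (α + β) - 2 * M * 0 * δ + 0 ^ 2 * ((α - 0 * δ) * (β - 0 * δ)))) := by
    apply Tendsto.mono_left _ nhdsWithin_le_nhds
    apply Continuous.tendsto (f := fun ε : ℝ => M * (α + β) - 2 * M * ε * δ + ε ^ 2 * ((α - ε * δ) * (β - ε * δ)))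
    fun_prop
  have pos : ∀ α : ℝ, ∀ᶠ ε in 𝓝[>] (0 : ℝ), 0 < M + ε ^ 2 * α - ε ^ 3 * δ := by
    intro α
    have : Tendsto (fun ε : ℝ => M + ε ^ 2 * α - ε ^ 3 * δ) (𝓝[>] 0) (𝓝 (M + 0 ^ 2 * α - 0 ^ 3 * δ)) := by
      apply Tendsto.mono_left _ nhdsWithin_le_nhds
      apply Continuous.tendsto (f := fun ε : ℝ => M + ε ^ 2 * α - ε ^ 3 * δ)
      fun_prop
    exact this.eventually (lt_mem_nhds (by simpa using hm))
  have small : ∀ᶠ ε in 𝓝[>] (0 : ℝ), ε * C < 1 := by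
    have : Tendsto (fun ε : ℝ => ε * C) (𝓝[>] 0) (𝓝 (0 * C)) := by
      apply Tendsto.mono_left _ nhdsWithin_le_nhds
      apply Continuous.tendsto (f := fun ε : ℝ => ε * C)
      fun_prop
    exact this.eventually (gt_mem_nhds (by simp))
  have small1 : ∀ᶠ ε in 𝓝[>] (0 : ℝ), ε < 1 :=
    Filter.Eventually.filter_mono nhdsWithin_le_nhds (gt_mem_nhds (by norm_num))
  have fin := le_of_tendsto t1 (b := 0) ?_
  · simpa using fin
  filter_upwards [H, pos α, pos β, small, small1, self_mem_nhdsWithin] with ε hε pα pβ sC s1 e0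
  have e0 : 0 < ε := e0
  have l1 := low ε e0 s1.le sC.le q hq.le le_rfl 1 (by norm_num)
  have l2 := low ε e0 s1.le sC.le 0 le_rfl hq.le (-1) (by norm_num)
  simp only [mul_one, mul_neg, neg_mul, mul_zero, zero_mul, sub_zero] at l1 l2
  have l2' : M + ε ^ 2 * β - ε ^ 3 * δ ≤ ∫ x, Real.exp (-(ε * G x)) ∂m := by
    simpa [β] using l2
  have pr := mul_le_mul l1 l2' pβ.le (pα.le.trans l1)
  have pr2 : (M + ε ^ 2 * α - ε ^ 3 * δ) * (M + ε ^ 2 * β - ε ^ 3 * δ) ≤ M ^ 2 := pr.trans hε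
  have e : (M + ε ^ 2 * α - ε ^ 3 * δ) * (M + ε ^ 2 * β - ε ^ 3 * δ) - M ^ 2 =
    ε ^ 2 * (M * (α + β) - 2 * M * ε * δ + ε ^ 2 * ((α - ε * δ) * (β - ε * δ))) := by ring
  by_contra hc
  push Not at hc
  have := mul_pos (pow_pos e0 2) hc
  linarith

/-- The (unnormalized) measure with density `exp (-V)`. -/
def gm {d : ℕ} (V : Euc d → ℝ) : Measure (Euc d) :=
  volume.withDensity (fun x => ENNReal.ofReal (Real.exp (-V x)))

/-- Maurey's property (τ). -/
lemma tau_prop {d : ℕ} {V : Euc d → ℝ} (hVc : Measurable V) {κ : ℝ}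
    (hV : ∀ x y, κ / 4 * ‖x - y‖ ^ 2 ≤ V x + V y - 2 * V ((1/2 : ℝ) • (x + y)))
    [IsFiniteMeasure (gm V)] {a b : Euc d → ℝ} (ha : Measurable a) (hb : Measurable b)
    (hab : ∀ x y, a x + b y ≤ κ / 4 * ‖x - y‖ ^ 2) :
    (∫ x, Real.exp (a x) ∂(gm V)) * (∫ x, Real.exp (b x) ∂(gm V)) ≤ (gm V).real univ ^ 2 := by
  have hρ : Measurable (fun x => ENNReal.ofReal (Real.exp (-V x))) := by fun_prop
  have pl := pl_euc d (fun x => ENNReal.ofReal (Real.exp (-V x)) * ENNReal.ofReal (Real.exp (a x)))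
    (fun x => ENNReal.ofReal (Real.exp (-V x)) * ENNReal.ofReal (Real.exp (b x)))
    (fun x => ENNReal.ofReal (Real.exp (-V x))) (by fun_prop) (by fun_prop) hρ (by
      intro x y
      rw [← ENNReal.ofReal_mul (Real.exp_pos _).le, ← ENNReal.ofReal_mul (Real.exp_pos _).le,
        ← ENNReal.ofReal_mul (by positivity), ← ENNReal.ofReal_pow (Real.exp_pos _).le,
        ← Real.exp_add, ← Real.exp_add, ← Real.exp_add, ← Real.exp_nat_mul]
      apply ENNReal.ofReal_le_ofReal
      apply Real.exp_le_exp.2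
      have := hV x y
      have := hab x y
      push_cast
      linarith)
  have e : ∀ c : Euc d → ℝ, Measurable c →
      ∫⁻ x, ENNReal.ofReal (Real.exp (-V x)) * ENNReal.ofReal (Real.exp (c x)) =
      ∫⁻ x, ENNReal.ofReal (Real.exp (c x)) ∂(gm V) := by
    intro c hc
    rw [gm, lintegral_withDensity_eq_lintegral_mul _ hρ (by fun_prop)]
    rfl
  rw [e a ha, e b hb] at pl
  have e1 : ∫⁻ x, ENNReal.ofReal (Real.exp (-V x)) = gm V univ := by
    rw [gm, withDensity_apply _ MeasurableSet.univ]; simp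
  rw [e1] at pl
  rw [integral_eq_lintegral_of_nonneg_ae (ae_of_all _ fun x => (Real.exp_pos _).le) (by fun_prop),
    integral_eq_lintegral_of_nonneg_ae (ae_of_all _ fun x => (Real.exp_pos _).le) (by fun_prop),
    ← ENNReal.toReal_mul, measureReal_def, ← ENNReal.toReal_pow]
  exact ENNReal.toReal_mono (by finiteness) pl

/-- Poincaré for `C²` compactly supported functions. -/
lemma poincare_smooth {d : ℕ} {V : Euc d → ℝ} (hVc : Measurable V) {κ : ℝ} (hκ : 0 < κ)
    (hV : ∀ x y, κ / 4 * ‖x - y‖ ^ 2 ≤ V x + V y - 2 * V ((1/2 : ℝ) • (x + y)))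
    [IsFiniteMeasure (gm V)] {g : Euc d → ℝ} (hg : ContDiff ℝ 2 g) (hgs : HasCompactSupport g)
    (c : ℝ) (hc : ∫ x, (g x - c) ∂(gm V) = 0) :
    ∫ x, (g x - c) ^ 2 ∂(gm V) ≤ (2 / κ) * ∫ x, ‖fderiv ℝ g x‖ ^ 2 ∂(gm V) := by
  have hD1 : ContDiff ℝ 1 (fderiv ℝ g) := hg.fderiv_right (by norm_num)
  have hDs : HasCompactSupport (fderiv ℝ g) := hgs.fderiv ℝ
  obtain ⟨K, hK⟩ := hD1.lipschitzWith_of_hasCompactSupport hDs (by norm_num)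
  obtain ⟨B1, hB1⟩ := hgs.exists_bound_of_continuous hg.continuous
  obtain ⟨B2, hB2⟩ := hDs.exists_bound_of_continuous hD1.continuous
  have taylor : ∀ x y, g x - g y ≤ ‖fderiv ℝ g x‖ * ‖x - y‖ + K * ‖x - y‖ ^ 2 := by
    intro x y
    have h := (convex_segment (𝕜 := ℝ) x y).norm_image_sub_le_of_norm_hasFDerivWithin_le' (f := g)
      (f' := fderiv ℝ g) (φ := fderiv ℝ g x) (C := K * ‖x - y‖)
      (fun z _ => ((hg.differentiable (by norm_num)) z).hasFDerivAt.hasFDerivWithinAt)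
      (fun z hz => by
        have := hK.dist_le_mul z x
        rw [dist_eq_norm, dist_eq_norm] at this
        refine this.trans ?_
        gcongr
        rw [← dist_eq_norm, dist_comm, ← dist_eq_norm]
        have := dist_add_dist_of_mem_segment hz
        linarith [dist_nonneg (x := z) (y := y)])
      (right_mem_segment ℝ x y) (left_mem_segment ℝ x y)
    have h2 := (le_abs_self _).trans h
    have h3 : fderiv ℝ g x (x - y) ≤ ‖fderiv ℝ g x‖ * ‖x - y‖ :=
      (le_abs_self _).trans ((fderiv ℝ g x).le_opNorm _)
    nlinarith
  refine var_core (gm V) (G := fun x => g x - c) (D := fun x => ‖fderiv ℝ g x‖)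
    (B := max (B1 + |c|) (B2 ^ 2)) (by have := hg.continuous.measurable; fun_prop)
    (hD1.continuous.norm.measurable) (by positivity) ?_ ?_ hc ?_
  · intro x
    refine le_trans ?_ (le_max_left _ _)
    exact (abs_sub _ _).trans (by gcongr; exact hB1 x)
  · intro x
    refine le_trans ?_ (le_max_right _ _)
    exact pow_le_pow_left₀ (norm_nonneg _) (hB2 x) 2
  · have small : ∀ᶠ ε in 𝓝[>] (0 : ℝ), ε * K < κ / 8 := by
      have : Tendsto (fun ε : ℝ => ε * K) (𝓝[>] 0) (𝓝 (0 * K)) := by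
        apply Tendsto.mono_left _ nhdsWithin_le_nhds
        apply Continuous.tendsto (f := fun ε : ℝ => ε * K)
        fun_prop
      exact this.eventually (gt_mem_nhds (by simp; positivity))
    filter_upwards [small, self_mem_nhdsWithin] with ε hε e0
    have e0 : 0 < ε := e0
    have mg := hg.continuous.measurable
    have mD := hD1.continuous.norm.measurable
    refine tau_prop hVc hV (by fun_prop) (by fun_prop) ?_
    intro x y
    have ht := mul_le_mul_of_nonneg_left (taylor x y) e0.le
    set r := ‖x - y‖
    set D := ‖fderiv ℝ g x‖
    have am : ε * D * r ≤ ε ^ 2 * (2 / κ) * D ^ 2 + κ / 8 * r ^ 2 := by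
      have : 0 ≤ (2 / κ) * (ε * D - κ / 4 * r) ^ 2 := by positivity
      have e : (2 / κ) * (ε * D - κ / 4 * r) ^ 2 = ε ^ 2 * (2 / κ) * D ^ 2 + κ / 8 * r ^ 2 - ε * D * r := by
        field_simp; ring
      linarith
    have : ε * K * r ^ 2 ≤ κ / 8 * r ^ 2 := by gcongr
    nlinarith

/-- Mollification. -/
def moll {d : ℕ} (ψ : ContDiffBump (0 : Euc d)) (F : Euc d → ℝ) : Euc d → ℝ :=
  convolution F (ψ.normed volume) (ContinuousLinearMap.lsmul ℝ ℝ) volume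

lemma moll_eq {d : ℕ} (ψ : ContDiffBump (0 : Euc d)) (F : Euc d → ℝ) :
    moll ψ F = convolution (ψ.normed volume) F (ContinuousLinearMap.lsmul ℝ ℝ) volume := by
  ext x
  rw [moll, convolution_lsmul, convolution_lsmul_swap]
  simp only [smul_eq_mul, mul_comm]

lemma moll_contDiff {d : ℕ} (ψ : ContDiffBump (0 : Euc d)) {F : Euc d → ℝ} (hF : Continuous F) :
    ContDiff ℝ 2 (moll ψ F) := by
  have := ψ.hasCompactSupport_normed (μ := volume).contDiff_convolution_right (n := 2)
    (ContinuousLinearMap.lsmul ℝ ℝ)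
    (hF.locallyIntegrable (μ := volume)) (ψ.contDiff_normed)
  exact this

lemma moll_compact {d : ℕ} (ψ : ContDiffBump (0 : Euc d)) {F : Euc d → ℝ}
    (hF : HasCompactSupport F) : HasCompactSupport (moll ψ F) :=
  hF.convolution _ ψ.hasCompactSupport_normed

lemma int_comp {d : ℕ} {A : Euc d → ℝ} (hA : Integrable A) (ψ : ContDiffBump (0 : Euc d))
    (x : Euc d) : Integrable (fun t => ψ.normed volume (x - t) * A t) := by
  obtain ⟨B, hB⟩ := ψ.hasCompactSupport_normed (μ := volume).exists_bound_of_continuous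
    ψ.continuous_normed
  refine hA.bdd_mul (c := B) (Continuous.aestronglyMeasurable ?_) (ae_of_all _ fun t => hB _)
  exact ψ.continuous_normed.comp (by fun_prop)

lemma int_psi {d : ℕ} (ψ : ContDiffBump (0 : Euc d)) (x : Euc d) :
    Integrable (fun t => ψ.normed volume (x - t)) ∧ ∫ t, ψ.normed volume (x - t) = 1 := by
  constructor
  · exact (ψ.integrable_normed (μ := volume)).comp_sub_left x
  · rw [integral_sub_left_eq_self (fun t => ψ.normed volume t) volume x]
    exact ψ.integral_normed

lemma jensen_sq {Ω : Type*} [MeasurableSpace Ω] {m : Measure Ω} {p a : Ω → ℝ}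
    (p0 : ∀ x, 0 ≤ p x) (hp : Integrable p m) (hp1 : ∫ x, p x ∂m = 1)
    (h1 : Integrable (fun x => p x * a x) m) (h2 : Integrable (fun x => p x * a x ^ 2) m) :
    (∫ x, p x * a x ∂m) ^ 2 ≤ ∫ x, p x * a x ^ 2 ∂m := by
  set c := ∫ x, p x * a x ∂m with hc
  have h : 0 ≤ ∫ x, p x * (a x - c) ^ 2 ∂m :=
    integral_nonneg fun x => mul_nonneg (p0 x) (sq_nonneg _)
  have e : ∀ x, p x * (a x - c) ^ 2 = p x * a x ^ 2 - 2 * c * (p x * a x) + c ^ 2 * p x := by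
    intro x; ring
  simp only [e] at h
  have j : Integrable (fun x => p x * a x ^ 2 - 2 * c * (p x * a x)) m := h2.sub (h1.const_mul _)
  rw [integral_add j (hp.const_mul _), integral_sub h2 (h1.const_mul _), integral_const_mul,
    integral_const_mul, hp1, ← hc] at h
  nlinarith

lemma moll_fderiv {d : ℕ} (ψ : ContDiffBump (0 : Euc d)) {F : Euc d → ℝ} (hF : Differentiable ℝ F)
    (hFs : HasCompactSupport F) (hA : Integrable (fun x => ‖fderiv ℝ F x‖ ^ 2)) (x : Euc d) :
    ‖fderiv ℝ (moll ψ F) x‖ ^ 2 ≤ ∫ t, ψ.normed volume (x - t) * ‖fderiv ℝ F t‖ ^ 2 := by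
  have hDs : HasCompactSupport (fderiv ℝ F) := hFs.fderiv ℝ
  have mD : Measurable (fderiv ℝ F) := measurable_fderiv ℝ F
  have hD : Integrable (fderiv ℝ F) := by
    have i1 : Integrable (fun t => (tsupport (fderiv ℝ F)).indicator (fun _ => (1 : ℝ)) t
        + ‖fderiv ℝ F t‖ ^ 2) := by
      refine Integrable.add ?_ hA
      rw [integrable_indicator_iff hDs.measurableSet]
      exact integrableOn_const (hs := hDs.measure_lt_top.ne)
    refine i1.mono' mD.aestronglyMeasurable (ae_of_all _ fun t => ?_)
    by_cases ht : t ∈ tsupport (fderiv ℝ F)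
    · rw [indicator_of_mem ht]
      nlinarith [sq_nonneg (‖fderiv ℝ F t‖ - 1), norm_nonneg (fderiv ℝ F t)]
    · rw [image_eq_zero_of_notMem_tsupport ht]
      simp [ht]
  have hn : Integrable (fun t => ‖fderiv ℝ F t‖) := hD.norm
  have hFc := hF.continuous
  have hψ1 : ContDiff ℝ 1 (ψ.normed volume) := ψ.contDiff_normed
  have hψs := ψ.hasCompactSupport_normed (μ := volume)
  have hder := hψs.hasFDerivAt_convolution_right (ContinuousLinearMap.lsmul ℝ ℝ)
    (hFc.locallyIntegrable (μ := volume)) hψ1 x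
  have hFi : Integrable F := hFc.integrable_of_hasCompactSupport hFs
  have key : ∀ v, fderiv ℝ (moll ψ F) x v = ∫ t, ψ.normed volume (x - t) * fderiv ℝ F t v := by
    intro v
    have h1 : fderiv ℝ (moll ψ F) x v = ∫ t, F t * fderiv ℝ (ψ.normed volume) (x - t) v := by
      rw [moll, hder.fderiv, convolution_precompR_apply _ (hFc.locallyIntegrable (μ := volume))
        (hψs.fderiv ℝ) (hψ1.continuous_fderiv (by norm_num))]
      rfl
    have hdd : ∀ t, HasFDerivAt (fun t => ψ.normed volume (x - t))
        (-(fderiv ℝ (ψ.normed volume) (x - t))) t := by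
      intro t
      have a1 := (hψ1.differentiable (by norm_num) (x - t)).hasFDerivAt
      have a2 : HasFDerivAt (fun t : Euc d => x - t) (-(ContinuousLinearMap.id ℝ (Euc d))) t := by
        simpa using! (hasFDerivAt_id t).const_sub x
      have := a1.comp t a2
      convert! this using 1
      ext v; simp
    obtain ⟨B, hB⟩ := (hψs.fderiv ℝ).exists_bound_of_continuous
      (hψ1.continuous_fderiv (by norm_num))
    have hi : Integrable (fun t => fderiv ℝ (fun t => ψ.normed volume (x - t)) t v * F t) := by
      refine hFi.bdd_mul (c := B * ‖v‖) ?_ (ae_of_all _ fun t => ?_)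
      · exact (measurable_fderiv_apply_const ℝ _ v).aestronglyMeasurable
      · rw [(hdd t).fderiv]
        refine (ContinuousLinearMap.le_opNorm _ _).trans ?_
        rw [norm_neg]
        gcongr
        exact hB _
    have hDv : Integrable (fun t => fderiv ℝ F t v) := hD.apply_continuousLinearMap v
    have ibp := integral_mul_fderiv_eq_neg_fderiv_mul_of_integrable (μ := volume)
      (f := fun t => ψ.normed volume (x - t)) (g := F) (v := v) hi
      (int_comp hDv ψ x) (int_comp hFi ψ x)
      (fun t _ => (hdd t).differentiableAt) (fun t _ => hF t)
    rw [ibp, h1, ← integral_neg]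
    refine integral_congr_ae (ae_of_all _ fun t => ?_)
    simp only
    rw [(hdd t).fderiv]
    simp [mul_comm]
  have bound : ‖fderiv ℝ (moll ψ F) x‖ ≤ ∫ t, ψ.normed volume (x - t) * ‖fderiv ℝ F t‖ := by
    refine ContinuousLinearMap.opNorm_le_bound _ (integral_nonneg fun t =>
      mul_nonneg (ψ.nonneg_normed _) (norm_nonneg _)) fun v => ?_
    rw [key, ← integral_mul_const]
    refine norm_integral_le_of_norm_le ((int_comp hn ψ x).mul_const _) (ae_of_all _ fun t => ?_)
    rw [norm_mul, Real.norm_of_nonneg (ψ.nonneg_normed _), mul_assoc]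
    exact mul_le_mul_of_nonneg_left (ContinuousLinearMap.le_opNorm _ _) (ψ.nonneg_normed _)
  refine (pow_le_pow_left₀ (norm_nonneg _) bound 2).trans ?_
  exact jensen_sq (fun t => ψ.nonneg_normed _) (int_psi ψ x).1 (int_psi ψ x).2
    (int_comp hn ψ x) (int_comp hA ψ x)

lemma gm_integral {d : ℕ} {V : Euc d → ℝ} (hV : Continuous V) (A : Euc d → ℝ) :
    ∫ x, A x ∂(gm V) = ∫ x, Real.exp (-V x) * A x := by
  rw [gm, integral_withDensity_eq_integral_toReal_smul (by fun_prop) (by simp)]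
  refine integral_congr_ae (ae_of_all _ fun x => ?_)
  simp [ENNReal.toReal_ofReal (Real.exp_pos _).le]

lemma gm_integrable {d : ℕ} {V : Euc d → ℝ} (hV : Continuous V) (A : Euc d → ℝ) :
    Integrable A (gm V) ↔ Integrable (fun x => Real.exp (-V x) * A x) := by
  rw [gm, integrable_withDensity_iff_integrable_smul' (by fun_prop) (by simp)]
  simp [ENNReal.toReal_ofReal (Real.exp_pos _).le]

lemma moll_energy {d : ℕ} {V : Euc d → ℝ} (hV : Continuous V)
    (ψ : ContDiffBump (0 : Euc d)) {F : Euc d → ℝ} (hF : Differentiable ℝ F)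
    (hFs : HasCompactSupport F) (hA : Integrable (fun x => ‖fderiv ℝ F x‖ ^ 2))
    (hAV : Integrable (fun x => ‖fderiv ℝ F x‖ ^ 2) (gm V)) {ε : ℝ} (hε : 0 < ε)
    (hψ : ∀ t ∈ tsupport (fderiv ℝ F), ∀ x, dist x t < ψ.rOut →
      Real.exp (-V x) ≤ Real.exp (-V t) + ε) :
    ∫ x, ‖fderiv ℝ (moll ψ F) x‖ ^ 2 ∂(gm V) ≤
      (∫ x, ‖fderiv ℝ F x‖ ^ 2 ∂(gm V)) + ε * ∫ x, ‖fderiv ℝ F x‖ ^ 2 := by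
  have mD : Measurable (fun x => ‖fderiv ℝ F x‖ ^ 2) := ((measurable_fderiv ℝ F).norm).pow_const 2
  have mψ : Measurable (ψ.normed volume) := ψ.continuous_normed.measurable
  have hAV' := (gm_integrable hV _).1 hAV
  have iR : Integrable (fun t => (Real.exp (-V t) + ε) * ‖fderiv ℝ F t‖ ^ 2) := by
    have : Integrable (fun t => Real.exp (-V t) * ‖fderiv ℝ F t‖ ^ 2 + ε * ‖fderiv ℝ F t‖ ^ 2) :=
      hAV'.add (hA.const_mul ε)
    simpa only [add_mul] using this
  have eR : (∫ x, ‖fderiv ℝ F x‖ ^ 2 ∂(gm V)) + ε * ∫ x, ‖fderiv ℝ F x‖ ^ 2 =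
      ∫ t, (Real.exp (-V t) + ε) * ‖fderiv ℝ F t‖ ^ 2 := by
    rw [gm_integral hV, ← integral_const_mul, ← integral_add hAV' (hA.const_mul ε)]
    simp only [add_mul]
  rw [eR, gm_integral hV]
  have mG : Measurable (fun x => ‖fderiv ℝ (moll ψ F) x‖ ^ 2) :=
    ((measurable_fderiv ℝ _).norm).pow_const 2
  rw [integral_eq_lintegral_of_nonneg_ae (ae_of_all _ fun x => by positivity)
    (by fun_prop), integral_eq_lintegral_of_nonneg_ae (ae_of_all _ fun x => by positivity)
    (by fun_prop)]
  refine ENNReal.toReal_mono ?_ ?_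
  · have := iR.lintegral_lt_top
    exact this.ne
  calc ∫⁻ x, ENNReal.ofReal (Real.exp (-V x) * ‖fderiv ℝ (moll ψ F) x‖ ^ 2)
      ≤ ∫⁻ x, ∫⁻ t, ENNReal.ofReal (Real.exp (-V x) * (ψ.normed volume (x - t) * ‖fderiv ℝ F t‖ ^ 2)) := by
        refine lintegral_mono fun x => ?_
        rw [← ofReal_integral_eq_lintegral_ofReal ((int_comp hA ψ x).const_mul _)
          (ae_of_all _ fun t => mul_nonneg (Real.exp_pos _).le (mul_nonneg (ψ.nonneg_normed _) (by positivity)))]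
        apply ENNReal.ofReal_le_ofReal
        rw [integral_const_mul]
        gcongr
        exact moll_fderiv ψ hF hFs hA x
    _ = ∫⁻ t, ∫⁻ x, ENNReal.ofReal (Real.exp (-V x) * (ψ.normed volume (x - t) * ‖fderiv ℝ F t‖ ^ 2)) := by
        apply lintegral_lintegral_swap
        apply Measurable.aemeasurable
        apply Measurable.ennreal_ofReal
        have m1 : Measurable (fun p : Euc d × Euc d => Real.exp (-V p.1)) := by fun_prop
        have m2 : Measurable (fun p : Euc d × Euc d => ψ.normed volume (p.1 - p.2)) :=
          mψ.comp (measurable_fst.sub measurable_snd)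
        have m3 : Measurable (fun p : Euc d × Euc d => ‖fderiv ℝ F p.2‖ ^ 2) :=
          mD.comp measurable_snd
        exact m1.mul (m2.mul m3)
    _ ≤ ∫⁻ t, ENNReal.ofReal ((Real.exp (-V t) + ε) * ‖fderiv ℝ F t‖ ^ 2) := by
        refine lintegral_mono fun t => ?_
        by_cases ht : t ∈ tsupport (fderiv ℝ F)
        swap
        · rw [image_eq_zero_of_notMem_tsupport ht]
          simp
        set A := ‖fderiv ℝ F t‖ ^ 2
        have hA0 : 0 ≤ A := by positivity
        have c0 : 0 ≤ (Real.exp (-V t) + ε) * A := by positivity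
        calc _ ≤ ∫⁻ x, ENNReal.ofReal ((Real.exp (-V t) + ε) * A) *
                ENNReal.ofReal (ψ.normed volume (x - t)) := by
              refine lintegral_mono fun x => ?_
              rw [← ENNReal.ofReal_mul c0]
              apply ENNReal.ofReal_le_ofReal
              by_cases hx : dist x t < ψ.rOut
              · have := hψ t ht x hx
                have p0 : 0 ≤ ψ.normed volume (x - t) := ψ.nonneg_normed _
                calc _ ≤ (Real.exp (-V t) + ε) * (ψ.normed volume (x - t) * A) := by gcongr
                  _ = _ := by ring
              · have : ψ.normed volume (x - t) = 0 := by
                  rw [← Function.notMem_support, ψ.support_normed_eq]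
                  rw [dist_eq_norm] at hx
                  simpa using hx
                simp [this]
          _ = ENNReal.ofReal ((Real.exp (-V t) + ε) * A) := by
              rw [lintegral_const_mul _ (by fun_prop)]
              rw [lintegral_sub_right_eq_self (fun x => ENNReal.ofReal (ψ.normed volume x)) t,
                ← ofReal_integral_eq_lintegral_ofReal ψ.integrable_normed
                  (ae_of_all _ fun t => ψ.nonneg_normed _), ψ.integral_normed]
              simp

lemma poincare_smooth' {d : ℕ} {V : Euc d → ℝ} (hVc : Measurable V) {κ : ℝ} (hκ : 0 < κ)
    (hV : ∀ x y, κ / 4 * ‖x - y‖ ^ 2 ≤ V x + V y - 2 * V ((1/2 : ℝ) • (x + y)))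
    [IsFiniteMeasure (gm V)] {g : Euc d → ℝ} (hg : ContDiff ℝ 2 g) (hgs : HasCompactSupport g) :
    (gm V).real univ * (∫ x, g x ^ 2 ∂(gm V)) - (∫ x, g x ∂(gm V)) ^ 2
      ≤ (2 / κ) * (gm V).real univ * ∫ x, ‖fderiv ℝ g x‖ ^ 2 ∂(gm V) := by
  rcases eq_or_ne (gm V) 0 with hm0 | hm0
  · simp [hm0]
  have hm : 0 < (gm V).real univ := by
    rw [measureReal_def]
    exact ENNReal.toReal_pos (by simpa using hm0) (by finiteness)
  set m := gm V
  set M := m.real univ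
  obtain ⟨B, hB⟩ := hgs.exists_bound_of_continuous hg.continuous
  have i1 : Integrable g m := Integrable.of_bound hg.continuous.aestronglyMeasurable B (ae_of_all _ hB)
  have i2 : Integrable (fun x => g x ^ 2) m :=
    Integrable.of_bound (hg.continuous.pow 2).aestronglyMeasurable (B ^ 2) (ae_of_all _ fun x => by
      rw [norm_pow]; exact pow_le_pow_left₀ (norm_nonneg _) (hB x) 2)
  set J := ∫ x, g x ∂m with hJ
  have h := poincare_smooth hVc hκ hV hg hgs (J / M) (by
    rw [integral_sub i1 (integrable_const _), integral_const, smul_eq_mul]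
    rw [mul_div_cancel₀ _ hm.ne', sub_self])
  have e : ∀ x, (g x - J / M) ^ 2 = g x ^ 2 - 2 * (J / M) * g x + (J / M) ^ 2 := fun x => by ring
  simp only [e] at h
  have j : Integrable (fun x => g x ^ 2 - 2 * (J / M) * g x) m := i2.sub (i1.const_mul _)
  rw [integral_add j (integrable_const _), integral_sub i2 (i1.const_mul _), integral_const_mul,
    integral_const, smul_eq_mul] at h
  have h2 := mul_le_mul_of_nonneg_left h hm.le
  have e2 : M * (∫ x, g x ^ 2 ∂m - 2 * (J / M) * J + M * (J / M) ^ 2) = M * (∫ x, g x ^ 2 ∂m) - J ^ 2 := by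
    field_simp; ring
  change M * (∫ x, g x ^ 2 ∂m - 2 * (J / M) * J + M * (J / M) ^ 2) ≤ _ at h2
  rw [e2] at h2
  linarith

/-- Poincaré for differentiable compactly supported functions. -/
lemma poincare_cpt {d : ℕ} {V : Euc d → ℝ} (hVc : Continuous V) {κ : ℝ} (hκ : 0 < κ)
    (hV : ∀ x y, κ / 4 * ‖x - y‖ ^ 2 ≤ V x + V y - 2 * V ((1/2 : ℝ) • (x + y)))
    [IsFiniteMeasure (gm V)] {F : Euc d → ℝ} (hF : Differentiable ℝ F) (hFs : HasCompactSupport F)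
    (hAV : Integrable (fun x => ‖fderiv ℝ F x‖ ^ 2) (gm V)) :
    (gm V).real univ * (∫ x, F x ^ 2 ∂(gm V)) - (∫ x, F x ∂(gm V)) ^ 2
      ≤ (2 / κ) * (gm V).real univ * ∫ x, ‖fderiv ℝ F x‖ ^ 2 ∂(gm V) := by
  have hDs : HasCompactSupport (fderiv ℝ F) := hFs.fderiv ℝ
  have mD : Measurable (fun x => ‖fderiv ℝ F x‖ ^ 2) := ((measurable_fderiv ℝ F).norm).pow_const 2
  have hA : Integrable (fun x => ‖fderiv ℝ F x‖ ^ 2) := by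
    obtain ⟨C, hC⟩ := hDs.isCompact.bddAbove_image (f := fun x => Real.exp (V x))
      (by fun_prop)
    refine (((gm_integrable hVc _).1 hAV).const_mul C).mono' mD.aestronglyMeasurable
      (ae_of_all _ fun x => ?_)
    rw [Real.norm_of_nonneg (by positivity)]
    by_cases hx : x ∈ tsupport (fderiv ℝ F)
    · have h1 : Real.exp (V x) ≤ C := hC ⟨x, hx, rfl⟩
      have h2 : 1 ≤ C * Real.exp (-V x) := by
        calc (1 : ℝ) = Real.exp (V x) * Real.exp (-V x) := by rw [← Real.exp_add]; simp
          _ ≤ _ := by gcongr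
      rw [← mul_assoc]
      exact le_mul_of_one_le_left (by positivity) h2
    · rw [image_eq_zero_of_notMem_tsupport hx]; simp
  have hr : ∀ n : ℕ, (0 : ℝ) < 1 / (n + 1) := fun n => by positivity
  let ψ : ℕ → ContDiffBump (0 : Euc d) := fun n => ⟨1 / (n + 1) / 2, 1 / (n + 1), half_pos (hr n), half_lt_self (hr n)⟩
  have ψr : Tendsto (fun n => (ψ n).rOut) atTop (𝓝 0) := tendsto_one_div_add_atTop_nhds_zero_nat
  obtain ⟨B, hB⟩ := hFs.exists_bound_of_continuous hF.continuous
  have ptw : ∀ x, Tendsto (fun n => moll (ψ n) F x) atTop (𝓝 (F x)) := by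
    intro x
    simp only [moll_eq]
    exact ContDiffBump.convolution_tendsto_right_of_continuous ψr hF.continuous x
  have bdd : ∀ n x, ‖moll (ψ n) F x‖ ≤ 3 * B := by
    intro n x
    have h := ContDiffBump.dist_normed_convolution_le (φ := ψ n) (μ := volume) (g := F) (x₀ := x)
      (ε := 2 * B) hF.continuous.aestronglyMeasurable (fun y _ => by
        rw [dist_eq_norm]
        have := norm_sub_le (F y) (F x)
        linarith [hB x, hB y])
    rw [← moll_eq, dist_eq_norm] at h
    have h2 := norm_le_norm_add_norm_sub' (moll (ψ n) F x) (F x)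
    linarith [hB x]
  have l1 : Tendsto (fun n => ∫ x, moll (ψ n) F x ∂(gm V)) atTop (𝓝 (∫ x, F x ∂(gm V))) := by
    refine tendsto_integral_of_dominated_convergence (fun _ => 3 * B) ?_ (integrable_const _) ?_ ?_
    · exact fun n => (moll_contDiff (ψ n) hF.continuous).continuous.aestronglyMeasurable
    · exact fun n => ae_of_all _ (bdd n)
    · exact ae_of_all _ ptw
  have l2 : Tendsto (fun n => ∫ x, moll (ψ n) F x ^ 2 ∂(gm V)) atTop (𝓝 (∫ x, F x ^ 2 ∂(gm V))) := by
    refine tendsto_integral_of_dominated_convergence (fun _ => (3 * B) ^ 2) ?_ (integrable_const _) ?_ ?_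
    · exact fun n => ((moll_contDiff (ψ n) hF.continuous).continuous.pow 2).aestronglyMeasurable
    · exact fun n => ae_of_all _ fun x => by
        rw [norm_pow]; exact pow_le_pow_left₀ (norm_nonneg _) (bdd n x) 2
    · exact ae_of_all _ fun x => (ptw x).pow 2
  have l3 := (l2.const_mul ((gm V).real univ)).sub (l1.pow 2)
  set M := (gm V).real univ
  have hM0 : 0 ≤ M := measureReal_nonneg
  set I := ∫ x, ‖fderiv ℝ F x‖ ^ 2 ∂(gm V)
  set J := ∫ x, ‖fderiv ℝ F x‖ ^ 2
  have hJ : 0 ≤ J := integral_nonneg fun x => by positivity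
  have step : ∀ ε : ℝ, 0 < ε → M * (∫ x, F x ^ 2 ∂(gm V)) - (∫ x, F x ∂(gm V)) ^ 2 ≤
      (2 / κ) * M * (I + ε * J) := by
    intro ε hε
    have uc := hDs.isCompact.uniformContinuousAt_of_continuousAt (fun x => Real.exp (-V x))
      (fun a _ => by fun_prop) (Metric.dist_mem_uniformity hε)
    obtain ⟨δ, hδ, hu⟩ := Metric.mem_uniformity_dist.1 uc
    refine le_of_tendsto l3 ?_
    filter_upwards [ψr.eventually (gt_mem_nhds hδ)] with n hn
    refine (poincare_smooth' hVc.measurable hκ hV (moll_contDiff (ψ n) hF.continuous)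
      (moll_compact (ψ n) hFs)).trans ?_
    refine mul_le_mul_of_nonneg_left ?_ (by positivity)
    refine moll_energy hVc (ψ n) hF hFs hA hAV hε ?_
    intro t ht x hx
    have hd : dist t x < δ := by rw [dist_comm]; exact hx.trans hn
    have h3 : dist (Real.exp (-V t)) (Real.exp (-V x)) < ε := hu hd ht
    rw [Real.dist_eq] at h3
    linarith [(abs_lt.1 h3).1]
  have lim : Tendsto (fun ε : ℝ => (2 / κ) * M * (I + ε * J)) (𝓝[>] 0) (𝓝 ((2 / κ) * M * (I + 0 * J))) := by
    apply Tendsto.mono_left _ nhdsWithin_le_nhds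
    apply Continuous.tendsto (f := fun ε : ℝ => (2 / κ) * M * (I + ε * J))
    fun_prop
  have fin := ge_of_tendsto lim (b := M * (∫ x, F x ^ 2 ∂(gm V)) - (∫ x, F x ∂(gm V)) ^ 2)
    (by filter_upwards [self_mem_nhdsWithin] with ε hε using step ε hε)
  simpa using fin

/-- Poincaré for differentiable functions, strongly log-concave case. -/
lemma poincare_slc {d : ℕ} {V : Euc d → ℝ} (hVc : Continuous V) {κ : ℝ} (hκ : 0 < κ)
    (hV : ∀ x y, κ / 4 * ‖x - y‖ ^ 2 ≤ V x + V y - 2 * V ((1/2 : ℝ) • (x + y)))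
    [IsFiniteMeasure (gm V)] {f : Euc d → ℝ} (hf : Differentiable ℝ f)
    (i1 : Integrable f (gm V)) (i2 : Integrable (fun x => f x ^ 2) (gm V))
    (i3 : Integrable (fun x => ‖fderiv ℝ f x‖ ^ 2) (gm V)) :
    ∃ c : ℝ, ∫ x, (f x - c) ^ 2 ∂(gm V) ≤ (2 / κ) * ∫ x, ‖fderiv ℝ f x‖ ^ 2 ∂(gm V) := by
  rcases eq_or_ne (gm V) 0 with hm0 | hm0
  · exact ⟨0, by simp [hm0]⟩
  have hm : 0 < (gm V).real univ := by
    rw [measureReal_def]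
    exact ENNReal.toReal_pos (by simpa using hm0) (by finiteness)
  let χ : ContDiffBump (0 : Euc d) := ⟨1, 2, by norm_num, by norm_num⟩
  have hχ : ContDiff ℝ 1 χ := χ.contDiff
  have hχs : HasCompactSupport χ := χ.hasCompactSupport
  obtain ⟨L, hL⟩ := (hχs.fderiv ℝ).exists_bound_of_continuous (hχ.continuous_fderiv (by norm_num))
  have hL0 : 0 ≤ L := (norm_nonneg _).trans (hL 0)
  let r : ℕ → ℝ := fun n => 1 / ((n : ℝ) + 1)
  have r0 : ∀ n, 0 < r n := fun n => by positivity
  have r1 : ∀ n, r n ≤ 1 := fun n => by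
    simp only [r]
    rw [div_le_one (by positivity)]
    linarith [(Nat.cast_nonneg n : (0 : ℝ) ≤ n)]
  have rl : Tendsto r atTop (𝓝 0) := tendsto_one_div_add_atTop_nhds_zero_nat
  have hd : ∀ n x, HasFDerivAt (fun x => χ (r n • x)) (r n • fderiv ℝ χ (r n • x)) x := by
    intro n x
    have a1 := (hχ.differentiable (by norm_num) (r n • x)).hasFDerivAt
    have a2 : HasFDerivAt (fun x : Euc d => r n • x) (r n • ContinuousLinearMap.id ℝ (Euc d)) x :=
      (hasFDerivAt_id x).const_smul (r n)
    have := a1.comp x a2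
    convert! this using 1
    ext v; simp
  let F : ℕ → Euc d → ℝ := fun n x => χ (r n • x) * f x
  have hFd : ∀ n x, HasFDerivAt (F n) (χ (r n • x) • fderiv ℝ f x + f x • (r n • fderiv ℝ χ (r n • x))) x :=
    fun n x => (hd n x).mul (hf x).hasFDerivAt
  have hFD : ∀ n, Differentiable ℝ (F n) := fun n x => (hFd n x).differentiableAt
  have hFs : ∀ n, HasCompactSupport (F n) := fun n => by
    have : HasCompactSupport (fun x : Euc d => χ (r n • x)) := hχs.comp_smul (r0 n).ne'
    exact this.mul_right
  have χ0 : ∀ x, 0 ≤ χ x := fun x => χ.nonneg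
  have χ1 : ∀ x, χ x ≤ 1 := fun x => χ.le_one
  have rx : ∀ x : Euc d, Tendsto (fun n => r n • x) atTop (𝓝 0) := fun x => by
    simpa using rl.smul_const x
  have χl : ∀ x, Tendsto (fun n => χ (r n • x)) atTop (𝓝 1) := fun x => by
    have h := (hχ.continuous.tendsto 0).comp (rx x)
    rwa [show χ 0 = 1 from χ.one_of_mem_closedBall (by simp [χ])] at h
  have ptF : ∀ x, Tendsto (fun n => F n x) atTop (𝓝 (f x)) := fun x => by
    simpa using (χl x).mul_const (f x)
  have Fle : ∀ n x, ‖F n x‖ ≤ ‖f x‖ := fun n x => by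
    simp only [F, norm_mul, Real.norm_of_nonneg (χ0 _)]
    exact mul_le_of_le_one_left (norm_nonneg _) (χ1 _)
  have ptD : ∀ x, Tendsto (fun n => fderiv ℝ (F n) x) atTop (𝓝 (fderiv ℝ f x)) := fun x => by
    simp only [(hFd _ x).fderiv]
    have t1 := (χl x).smul_const (fderiv ℝ f x)
    have t2 : Tendsto (fun n => fderiv ℝ χ (r n • x)) atTop (𝓝 (fderiv ℝ χ 0)) :=
      ((hχ.continuous_fderiv (by norm_num)).tendsto 0).comp (rx x)
    have t3 := t1.add ((rl.smul t2).const_smul (f x))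
    simpa using t3
  have Dle : ∀ n x, ‖fderiv ℝ (F n) x‖ ^ 2 ≤ 2 * ‖fderiv ℝ f x‖ ^ 2 + 2 * L ^ 2 * f x ^ 2 := fun n x => by
    rw [(hFd n x).fderiv]
    have b : ‖χ (r n • x) • fderiv ℝ f x + f x • (r n • fderiv ℝ χ (r n • x))‖ ≤
        ‖fderiv ℝ f x‖ + |f x| * L := by
      refine (norm_add_le _ _).trans ?_
      rw [norm_smul, norm_smul, norm_smul, Real.norm_of_nonneg (χ0 _), Real.norm_of_nonneg (r0 n).le,
        Real.norm_eq_abs]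
      gcongr
      · exact mul_le_of_le_one_left (norm_nonneg _) (χ1 _)
      · calc _ ≤ 1 * L := mul_le_mul (r1 n) (hL _) (norm_nonneg _) (by norm_num)
          _ = L := one_mul L
    refine (pow_le_pow_left₀ (norm_nonneg _) b 2).trans ?_
    have := sq_abs (f x)
    nlinarith [sq_nonneg (‖fderiv ℝ f x‖ - |f x| * L)]
  have mD : ∀ n, AEStronglyMeasurable (fun x => ‖fderiv ℝ (F n) x‖ ^ 2) (gm V) := fun n =>
    (((measurable_fderiv ℝ (F n)).norm).pow_const 2).aestronglyMeasurable
  have iD : Integrable (fun x => 2 * ‖fderiv ℝ f x‖ ^ 2 + 2 * L ^ 2 * f x ^ 2) (gm V) :=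
    (i3.const_mul 2).add (i2.const_mul _)
  have Dle' : ∀ n x, ‖‖fderiv ℝ (F n) x‖ ^ 2‖ ≤ 2 * ‖fderiv ℝ f x‖ ^ 2 + 2 * L ^ 2 * f x ^ 2 := fun n x => by
    rw [Real.norm_of_nonneg (by positivity)]; exact Dle n x
  have l1 : Tendsto (fun n => ∫ x, F n x ∂(gm V)) atTop (𝓝 (∫ x, f x ∂(gm V))) :=
    tendsto_integral_of_dominated_convergence (fun x => ‖f x‖)
      (fun n => (hFD n).continuous.aestronglyMeasurable) i1.norm (fun n => ae_of_all _ (Fle n))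
      (ae_of_all _ ptF)
  have l2 : Tendsto (fun n => ∫ x, F n x ^ 2 ∂(gm V)) atTop (𝓝 (∫ x, f x ^ 2 ∂(gm V))) :=
    tendsto_integral_of_dominated_convergence (fun x => f x ^ 2)
      (fun n => ((hFD n).continuous.pow 2).aestronglyMeasurable) i2
      (fun n => ae_of_all _ fun x => by
        rw [norm_pow, ← sq_abs (f x)]; exact pow_le_pow_left₀ (norm_nonneg _) (Fle n x) 2)
      (ae_of_all _ fun x => (ptF x).pow 2)
  have l3 : Tendsto (fun n => ∫ x, ‖fderiv ℝ (F n) x‖ ^ 2 ∂(gm V)) atTop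
      (𝓝 (∫ x, ‖fderiv ℝ f x‖ ^ 2 ∂(gm V))) :=
    tendsto_integral_of_dominated_convergence _ mD iD (fun n => ae_of_all _ (Dle' n))
      (ae_of_all _ fun x => (ptD x).norm.pow 2)
  have main := le_of_tendsto_of_tendsto' ((l2.const_mul ((gm V).real univ)).sub (l1.pow 2))
    (l3.const_mul ((2 / κ) * (gm V).real univ))
    (fun n => poincare_cpt hVc hκ hV (hFD n) (hFs n)
      (iD.mono' (mD n) (ae_of_all _ (Dle' n))))
  set m := gm V
  set M := m.real univ
  set J := ∫ x, f x ∂m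
  refine ⟨J / M, ?_⟩
  have e : ∀ x, (f x - J / M) ^ 2 = f x ^ 2 - 2 * (J / M) * f x + (J / M) ^ 2 := fun x => by ring
  simp only [e]
  have j : Integrable (fun x => f x ^ 2 - 2 * (J / M) * f x) m := i2.sub (i1.const_mul _)
  rw [integral_add j (integrable_const _), integral_sub i2 (i1.const_mul _), integral_const_mul,
    integral_const, smul_eq_mul]
  change ∫ x, f x ^ 2 ∂m - 2 * (J / M) * J + M * (J / M) ^ 2 ≤ _
  have e2 : M * (∫ x, f x ^ 2 ∂m - 2 * (J / M) * J + M * (J / M) ^ 2) = M * (∫ x, f x ^ 2 ∂m) - J ^ 2 := by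
    field_simp; ring
  refine le_of_mul_le_mul_left ?_ hm
  rw [e2]
  linarith

/-- Midpoint strong convexity from strong monotonicity of the gradient. -/
lemma mid_convex {d : ℕ} {v : Euc d → ℝ} {η : ℝ} (hv : Differentiable ℝ v)
    (hm : ∀ x y : Euc d, η * ‖x - y‖ ^ 2 ≤ ⟪gradient v x - gradient v y, x - y⟫) (x y : Euc d) :
    η / 4 * ‖x - y‖ ^ 2 ≤ v x + v y - 2 * v ((1/2 : ℝ) • (x + y)) := by
  set c := (1/2 : ℝ) • (x + y) with hc
  set h := (1/2 : ℝ) • (x - y) with hh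
  have dl : ∀ s t : ℝ, HasDerivAt (fun t : ℝ => v (c + (s * t) • h)) (s * ⟪gradient v (c + (s * t) • h), h⟫) t := by
    intro s t
    have a1 := (hv (c + (s * t) • h)).hasGradientAt.hasFDerivAt
    have a2 : HasDerivAt (fun t : ℝ => c + (s * t) • h) (s • h) t := by
      have := (((hasDerivAt_id t).const_mul s).smul_const h).const_add c
      simpa using! this
    have := a1.comp_hasDerivAt t a2
    convert! this using 1
    simp [inner_smul_right]
  let φ : ℝ → ℝ := fun t => v (c + (1 * t) • h) + v (c + (-1 * t) • h) - η * ‖h‖ ^ 2 * t ^ 2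
  have dφ : ∀ t, HasDerivAt φ (1 * ⟪gradient v (c + (1 * t) • h), h⟫ + -1 * ⟪gradient v (c + (-1 * t) • h), h⟫
      - η * ‖h‖ ^ 2 * (2 * t)) t := by
    intro t
    have := ((dl 1 t).add (dl (-1) t)).sub ((hasDerivAt_pow 2 t).const_mul (η * ‖h‖ ^ 2))
    have h2 : HasDerivAt φ _ t := this
    exact h2.congr_deriv (by simp)
  have mono : MonotoneOn φ (Icc 0 1) := by
    apply monotoneOn_of_deriv_nonneg (convex_Icc 0 1)
    · exact fun t _ => (dφ t).continuousAt.continuousWithinAt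
    · exact fun t _ => (dφ t).differentiableAt.differentiableWithinAt
    · intro t ht
      rw [interior_Icc] at ht
      rw [(dφ t).deriv]
      have h1 := hm (c + (1 * t) • h) (c + (-1 * t) • h)
      have e : c + (1 * t) • h - (c + (-1 * t) • h) = (2 * t) • h := by module
      rw [e, norm_smul, inner_smul_right, inner_sub_left, Real.norm_of_nonneg (by linarith [ht.1])] at h1
      have t0 := ht.1
      have h2 : (2 * t) * (⟪gradient v (c + (1 * t) • h), h⟫ - ⟪gradient v (c + (-1 * t) • h), h⟫
        - η * ‖h‖ ^ 2 * (2 * t)) ≥ 0 := by nlinarith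
      have := nonneg_of_mul_nonneg_right h2 (by linarith : 0 < 2 * t)
      linarith
  have hm1 := mono (by simp) (by simp) (zero_le_one' ℝ)
  have e1 : c + h = x := by rw [hc, hh]; module
  have e2 : c + (-1 : ℝ) • h = y := by rw [hc, hh]; module
  have e3 : ‖h‖ ^ 2 = ‖x - y‖ ^ 2 / 4 := by
    rw [hh, norm_smul, mul_pow]; norm_num; ring
  simp only [φ] at hm1
  simp only [mul_zero, zero_smul, add_zero, mul_one, one_smul, e1, e2, e3] at hm1
  linarith

/-- Sup-convolution regularization of a Lipschitz function. -/
lemma sup_conv {d : ℕ} {w : Euc d → ℝ} {M l : ℝ} (hM : 0 ≤ M) (hl : 0 < l)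
    (hw : ∀ x y, w x - w y ≤ M * ‖x - y‖) :
    ∃ W : Euc d → ℝ, Continuous W ∧ (∀ x, w x ≤ W x) ∧ (∀ x, W x ≤ w x + M ^ 2 / (2 * l)) ∧
      ∀ x y, -(l / 4 * ‖x - y‖ ^ 2) ≤ W x + W y - 2 * W ((1/2 : ℝ) • (x + y)) := by
  have ub : ∀ x z, w z - l / 2 * ‖x - z‖ ^ 2 ≤ w x + M ^ 2 / (2 * l) := by
    intro x z
    have h1 := hw z x
    rw [norm_sub_rev] at h1
    have h2 : M * ‖x - z‖ ≤ l / 2 * ‖x - z‖ ^ 2 + M ^ 2 / (2 * l) := by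
      have : 0 ≤ (1 / (2 * l)) * (M - l * ‖x - z‖) ^ 2 := by positivity
      have e : (1 / (2 * l)) * (M - l * ‖x - z‖) ^ 2 = l / 2 * ‖x - z‖ ^ 2 + M ^ 2 / (2 * l) - M * ‖x - z‖ := by
        field_simp; ring
      linarith
    linarith
  have bd : ∀ x, BddAbove (range fun z => w z - l / 2 * ‖x - z‖ ^ 2) := fun x =>
    ⟨_, by rintro _ ⟨z, rfl⟩; exact ub x z⟩
  let W : Euc d → ℝ := fun x => ⨆ z, (w z - l / 2 * ‖x - z‖ ^ 2)
  have Wge : ∀ x z, w z - l / 2 * ‖x - z‖ ^ 2 ≤ W x := fun x z => le_ciSup (bd x) z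
  refine ⟨W, ?_, ?_, fun x => ciSup_le (ub x), ?_⟩
  · have : LipschitzWith ⟨M, hM⟩ W := by
      apply LipschitzWith.of_le_add_mul
      intro x y
      refine ciSup_le fun z => ?_
      have h1 := Wge y (z + (y - x))
      have h2 := hw z (z + (y - x))
      have e1 : y - (z + (y - x)) = x - z := by abel
      have e2 : z - (z + (y - x)) = x - y := by abel
      rw [e1] at h1
      rw [e2] at h2
      rw [dist_eq_norm]
      change _ ≤ W y + M * ‖x - y‖
      linarith
    exact this.continuous
  · intro x
    simpa using Wge x x
  · intro x y
    have : W ((1/2 : ℝ) • (x + y)) ≤ (W x + W y + l / 4 * ‖x - y‖ ^ 2) / 2 := by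
      refine ciSup_le fun z => ?_
      have h1 := Wge x z
      have h2 := Wge y z
      have pl := parallelogram_law_with_norm ℝ (x - z) (y - z)
      have e1 : x - z + (y - z) = (2 : ℝ) • ((1/2 : ℝ) • (x + y) - z) := by module
      have e2 : x - z - (y - z) = x - y := by abel
      rw [e1, e2, norm_smul, Real.norm_of_nonneg (by norm_num : (0:ℝ) ≤ 2)] at pl
      nlinarith
    linarith

/-- Poincaré inequality for measures `p ∝ e^{−(v+w)}` with `∇²v ≥ η I` and
`|∇w| ≤ M`: the constant `C_P` depends only on `η`, `M` and the dimension `d`. -/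
theorem poincare_convex_plus_lipschitz (d : ℕ) (η M : ℝ) (hη : 0 < η) (hM : 0 ≤ M) :
    ∃ CP : ℝ, 0 < CP ∧
      ∀ u v w : Euc d → ℝ, (∀ x, u x = v x + w x) →
        ContDiff ℝ 2 v → ContDiff ℝ 2 w →
        (∀ x y : Euc d, η * ‖x - y‖ ^ 2 ≤ ⟪gradient v x - gradient v y, x - y⟫) →
        (∀ x, ‖gradient w x‖ ≤ M) →
        ∀ Z : ℝ, 0 < Z →
          ∀ μ : Measure (Euc d),
            μ = volume.withDensity (fun x => ENNReal.ofReal (Real.exp (-u x) / Z)) →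
            IsProbabilityMeasure μ →
            ∀ f : Euc d → ℝ, Differentiable ℝ f →
              Integrable f μ → Integrable (fun x => (f x) ^ 2) μ →
              Integrable (fun x => ‖gradient f x‖ ^ 2) μ →
              (∫ x, f x ∂μ) = 0 →
              (∫ x, (f x) ^ 2 ∂μ) ≤ CP * ∫ x, ‖gradient f x‖ ^ 2 ∂μ := by
  refine ⟨Real.exp (M ^ 2 / η) * (2 / (η / 2)), by positivity, ?_⟩
  intro u v w huv hv hw hmono hgrad Z hZ μ hμ hprob f hf i1 i2 i3 hmean
  have ng : ∀ (k : Euc d → ℝ) x, ‖gradient k x‖ = ‖fderiv ℝ k x‖ := fun k x => by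
    simp [gradient]
  simp only [ng] at i3 ⊢
  have hwL : ∀ x y, w x - w y ≤ M * ‖x - y‖ := by
    intro x y
    have := convex_univ.norm_image_sub_le_of_norm_fderiv_le (𝕜 := ℝ) (f := w) (C := M) (x := y) (y := x)
      (fun z _ => hw.differentiable (by norm_num) z) (fun z _ => by rw [← ng]; exact hgrad z)
      (mem_univ _) (mem_univ _)
    exact (le_abs_self _).trans this
  obtain ⟨W, Wc, W1, W2, W3⟩ := sup_conv hM (half_pos hη) hwL
  have hvc := hv.continuous
  have hwc := hw.continuous
  have huc : Continuous u := by
    have : u = fun x => v x + w x := funext huv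
    rw [this]; fun_prop
  set V : Euc d → ℝ := fun x => v x + W x with hVdef
  have hVc : Continuous V := by fun_prop
  have uV : ∀ x, u x ≤ V x := fun x => by rw [huv]; simp only [V]; linarith [W1 x]
  have Vu : ∀ x, V x ≤ u x + M ^ 2 / η := fun x => by
    have := W2 x
    rw [show 2 * (η / 2) = η by ring] at this
    rw [huv]; simp only [V]; linarith
  have hVm : ∀ x y, (η / 2) / 4 * ‖x - y‖ ^ 2 ≤ V x + V y - 2 * V ((1/2 : ℝ) • (x + y)) := by
    intro x y
    have h1 := mid_convex (hv.differentiable (by norm_num)) hmono x y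
    have h2 := W3 x y
    simp only [V]
    linarith
  have eV : ∀ x, Real.exp (-V x) ≤ Real.exp (-u x) := fun x => Real.exp_le_exp.2 (by linarith [uV x])
  have eu : ∀ x, Real.exp (-u x) ≤ Real.exp (M ^ 2 / η) * Real.exp (-V x) := fun x => by
    rw [← Real.exp_add]; exact Real.exp_le_exp.2 (by linarith [Vu x])
  have mint : ∀ A : Euc d → ℝ, ∫ x, A x ∂μ = Z⁻¹ * ∫ x, Real.exp (-u x) * A x := by
    intro A
    rw [hμ, integral_withDensity_eq_integral_toReal_smul (by fun_prop) (by simp), ← integral_const_mul]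
    refine integral_congr_ae (ae_of_all _ fun x => ?_)
    simp only [smul_eq_mul]
    rw [ENNReal.toReal_ofReal (by positivity)]
    ring
  have mable : ∀ A : Euc d → ℝ, Integrable A μ → Integrable (fun x => Real.exp (-u x) * A x) := by
    intro A hA
    rw [hμ, integrable_withDensity_iff_integrable_smul' (by fun_prop) (by simp)] at hA
    have := hA.const_mul Z
    refine this.congr (ae_of_all _ fun x => ?_)
    simp only [smul_eq_mul]
    rw [ENNReal.toReal_ofReal (by positivity)]
    field_simp
  have toV : ∀ A : Euc d → ℝ, Measurable A → Integrable A μ → Integrable A (gm V) := by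
    intro A mA hA
    rw [gm_integrable hVc]
    refine (mable A hA).norm.mono' (by fun_prop) (ae_of_all _ fun x => ?_)
    simp only [norm_mul, Real.norm_of_nonneg (Real.exp_pos _).le]
    exact mul_le_mul_of_nonneg_right (eV x) (norm_nonneg _)
  have hfin : IsFiniteMeasure (gm V) := by
    have h1 := toV (fun _ => (1 : ℝ)) measurable_const (integrable_const _)
    exact (integrable_const_iff_isFiniteMeasure (one_ne_zero)).1 h1
  have mf := hf.continuous.measurable
  have mD : Measurable (fun x => ‖fderiv ℝ f x‖ ^ 2) := ((measurable_fderiv ℝ f).norm).pow_const 2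
  obtain ⟨c, hc⟩ := poincare_slc hVc (half_pos hη) hVm hf (toV f mf i1) (toV _ (mf.pow_const 2) i2)
    (toV _ mD i3)
  rw [gm_integral hVc, gm_integral hVc] at hc
  have e : ∀ x, (f x - c) ^ 2 = f x ^ 2 - 2 * c * f x + c ^ 2 := fun x => by ring
  have j : Integrable (fun x => f x ^ 2 - 2 * c * f x) μ := i2.sub (i1.const_mul _)
  have jc : Integrable (fun x => (f x - c) ^ 2) μ := by
    simp only [e]; exact j.add (integrable_const _)
  have s1 : ∫ x, f x ^ 2 ∂μ ≤ ∫ x, (f x - c) ^ 2 ∂μ := by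
    simp only [e]
    rw [integral_add j (integrable_const _), integral_sub i2 (i1.const_mul _), integral_const_mul,
      integral_const, hmean]
    simp
    positivity
  have jcV := (gm_integrable hVc _).1 (toV _ ((mf.sub_const c).pow_const 2) jc)
  have jDV := (gm_integrable hVc _).1 (toV _ mD i3)
  have s2 : ∫ x, Real.exp (-u x) * (f x - c) ^ 2 ≤
      Real.exp (M ^ 2 / η) * ∫ x, Real.exp (-V x) * (f x - c) ^ 2 := by
    rw [← integral_const_mul]
    refine integral_mono (mable _ jc) (jcV.const_mul _) fun x => ?_
    simp only
    rw [← mul_assoc]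
    exact mul_le_mul_of_nonneg_right (eu x) (sq_nonneg _)
  have s3 : ∫ x, Real.exp (-V x) * ‖fderiv ℝ f x‖ ^ 2 ≤ ∫ x, Real.exp (-u x) * ‖fderiv ℝ f x‖ ^ 2 :=
    integral_mono jDV (mable _ i3) fun x => mul_le_mul_of_nonneg_right (eV x) (sq_nonneg _)
  refine s1.trans ?_
  rw [mint, mint]
  calc Z⁻¹ * ∫ x, Real.exp (-u x) * (f x - c) ^ 2
      ≤ Z⁻¹ * (Real.exp (M ^ 2 / η) * (2 / (η / 2) * ∫ x, Real.exp (-u x) * ‖fderiv ℝ f x‖ ^ 2)) := by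
        refine mul_le_mul_of_nonneg_left (s2.trans ?_) (by positivity)
        refine mul_le_mul_of_nonneg_left (hc.trans ?_) (by positivity)
        exact mul_le_mul_of_nonneg_left s3 (by positivity)
    _ = _ := by ring
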